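/- Let L > 0 and T > 0 (Kato smoothing effect). If z is a classical solution of the linearized KdV system on [0,T] with initial datum z₀ = z(0,·), then the space-time H¹ norm of z satisfies ‖z‖_{L²(0,T;H¹(0,L))} ≤ ((4T + L)/3)^{1/2} ‖z₀‖_{L²(0,L)}. -/

import Mathlib

open Set Real MeasureTheory

/-- The `L²(0,L)` norm of a function on `(0,L)`. -/
noncomputable def L2norm (L : ℝ) (f : ℝ → ℝ) : ℝ :=
  Real.sqrt (∫ x in (0:ℝ)..L, (f x) ^ 2)

/-- A classical solution of the linearized KdV system
`z_t + z_x + z_xxx = 0`, `z(t,0) = z(t,L) = z_x(t,L) = 0`, on `[0,T] × [0,L]`. -/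
def IsLinearKdVSol (L T : ℝ) (z : ℝ → ℝ → ℝ) : Prop :=
  (∀ t ∈ Icc (0:ℝ) T, ContDiffOn ℝ 3 (z t) (Icc (0:ℝ) L)) ∧
  (∀ x ∈ Icc (0:ℝ) L, ContDiffOn ℝ 1 (fun s => z s x) (Icc (0:ℝ) T)) ∧
  ContinuousOn (fun p : ℝ × ℝ => z p.1 p.2) (Icc (0:ℝ) T ×ˢ Icc (0:ℝ) L) ∧
  (∀ t ∈ Ioo (0:ℝ) T, ∀ x ∈ Ioo (0:ℝ) L,
    derivWithin (fun s => z s x) (Icc (0:ℝ) T) t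
      + derivWithin (z t) (Icc (0:ℝ) L) x
      + iteratedDerivWithin 3 (z t) (Icc (0:ℝ) L) x = 0) ∧
  (∀ t ∈ Icc (0:ℝ) T,
    z t 0 = 0 ∧ z t L = 0 ∧ derivWithin (z t) (Icc (0:ℝ) L) L = 0)

/-!
Multiplying the equation by `2 q z` with the Kato weight `q(t, x) = (x + 4(T - t)) / 3` and
integrating by parts in `x` gives `d/dt ∫ q z² ≤ -∫ (z² + z_x²)`. Integrating in `t` and using
`0 ≤ q ≤ (4T + L) / 3` yields the estimate.

The difficulty is the integration in `t`. The time derivative of a classical solution is only known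
to be continuous in `t` for each fixed `x` and bounded in `x` for each fixed `t`, so the
integrability of `z_t` in `(t, x)` has to be proved. Write `N t = ∫ z_t(t, ·)²`. The operator
`v ↦ -v_x - v_xxx` is dissipative, so distances between solutions decrease. If `N` is locally
bounded on `(c, t]`, then `‖z(c + d) - z(c)‖² ≤ (2d)² N c`, this bound propagates to
`‖z(t) - z(t - d)‖²`, and Fatou's lemma gives `N t ≤ 4 N c`. Suppose the set of times near which
`N` is unbounded is nonempty. It is closed and covered by the closed sets
`{t | sup |z_t(t, ·)| ≤ n}`, so by Baire's theorem `N` is bounded on its intersection with an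
interval around one of its points, and `N t ≤ 4 N c` carries the bound across the gaps to the whole
interval: a contradiction.
-/

open Filter Topology Function

lemma abs_mul_sq_add_two_mul_mul_le {k p u v B P : ℝ} (hu : |u| ≤ B) (hp : |p| ≤ P) :
    |k * u ^ 2 + 2 * p * (u * v)| ≤ |k| * B ^ 2 + P * (B ^ 2 + v ^ 2) := by
  have hP : 0 ≤ P := (abs_nonneg p).trans hp
  calc |k * u ^ 2 + 2 * p * (u * v)|
      ≤ |k| * |u| ^ 2 + |p| * (2 * |u| * |v|) := by
        refine (abs_add_le _ _).trans_eq ?_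
        simp only [abs_mul, abs_pow, abs_two]
        ring
    _ ≤ |k| * B ^ 2 + P * (B ^ 2 + v ^ 2) := by
        gcongr
        refine (two_mul_le_add_sq _ _).trans ?_
        rw [sq_abs v]
        gcongr

section DerivUnderIntegral

variable {X : Type*} [MeasurableSpace X] {μ : Measure X} {s t : ℝ}

lemma integrable_and_integral_norm_mul_sq_add_two_mul_mul_le [IsFiniteMeasure μ]
    {u v p : X → ℝ} {k B P : ℝ}
    (hmeas : AEStronglyMeasurable (fun x => k * u x ^ 2 + 2 * p x * (u x * v x)) μ)
    (hu : ∀ x, |u x| ≤ B) (hp : ∀ x, |p x| ≤ P) (hv : MemLp v 2 μ) :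
    Integrable (fun x => k * u x ^ 2 + 2 * p x * (u x * v x)) μ ∧
      ∫ x, ‖k * u x ^ 2 + 2 * p x * (u x * v x)‖ ∂μ ≤
        μ.real univ * (|k| * B ^ 2) + P * (μ.real univ * B ^ 2 + ∫ x, v x ^ 2 ∂μ) := by
  have hbound : ∀ x, ‖k * u x ^ 2 + 2 * p x * (u x * v x)‖ ≤
      |k| * B ^ 2 + P * (B ^ 2 + v x ^ 2) := fun x => abs_mul_sq_add_two_mul_mul_le (hu x) (hp x)
  have hsq : Integrable (fun x => B ^ 2 + v x ^ 2) μ := (integrable_const _).add hv.integrable_sq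
  have hdom : Integrable (fun x => |k| * B ^ 2 + P * (B ^ 2 + v x ^ 2)) μ :=
    (integrable_const _).add (hsq.const_mul P)
  have hint := hdom.mono' hmeas (.of_forall hbound)
  refine ⟨hint, (integral_mono hint.norm hdom hbound).trans_eq ?_⟩
  rw [integral_add (integrable_const _) (hsq.const_mul P), integral_const, integral_const_mul,
    integral_add (integrable_const _) hv.integrable_sq, integral_const, smul_eq_mul, smul_eq_mul]

lemma integral_sq_le_of_hasDerivAt_of_eventually_le {w : ℝ → X → ℝ} {w' : X → ℝ} {K : ℝ}
    (hw : ∀ r, Measurable (w r)) (hd : ∀ x, HasDerivAt (fun r => w r x) (w' x) t)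
    (hw' : MemLp w' 2 μ) (hint : ∀ r, MemLp (w r) 2 μ) (hK0 : 0 ≤ K)
    (hK : ∀ᶠ r in 𝓝[<] t, ∫ x, (w r x - w t x) ^ 2 ∂μ ≤ K * (r - t) ^ 2) :
    ∫ x, w' x ^ 2 ∂μ ≤ K := by
  have hlim : ∀ x, liminf (fun r => ENNReal.ofReal (slope (fun r => w r x) t r ^ 2)) (𝓝[<] t) =
      ENNReal.ofReal (w' x ^ 2) := fun x =>
    ((ENNReal.continuous_ofReal.tendsto _).comp (((hasDerivAt_iff_tendsto_slope.1 (hd x)).mono_left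
      (nhdsLT_le_nhdsNE t)).pow 2)).liminf_eq
  have hslope : ∀ᶠ r in 𝓝[<] t,
      ∫⁻ x, ENNReal.ofReal (slope (fun r => w r x) t r ^ 2) ∂μ ≤ ENNReal.ofReal K := by
    filter_upwards [hK, self_mem_nhdsWithin] with r hr hrt
    have hpos : 0 < (r - t) ^ 2 := sq_pos_of_neg (sub_neg.2 hrt)
    simp only [slope_def_field, div_pow]
    have hsq : Integrable (fun x => (w r x - w t x) ^ 2) μ := ((hint r).sub (hint t)).integrable_sq
    rw [← ofReal_integral_eq_lintegral_ofReal (hsq.div_const _)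
      (.of_forall fun x => by positivity), integral_div]
    exact ENNReal.ofReal_le_ofReal ((div_le_iff₀ hpos).2 hr)
  rw [← ENNReal.ofReal_le_ofReal_iff hK0,
    ofReal_integral_eq_lintegral_ofReal hw'.integrable_sq (.of_forall fun x => sq_nonneg _)]
  simp only [← hlim]
  refine (lintegral_liminf_le fun r => ?_).trans
    (liminf_le_of_frequently_le' hslope.frequently)
  simp only [slope_def_field]
  exact ((((hw r).sub (hw t)).div_const _).pow_const 2).ennreal_ofReal

variable [TopologicalSpace X] [OpensMeasurableSpace X]

lemma continuous_integral_sq [IsFiniteMeasure μ] {w : ℝ → X → ℝ} {B : ℝ}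
    (hw : Continuous (uncurry w)) (hB : ∀ r x, |w r x| ≤ B) :
    Continuous fun r => ∫ x, w r x ^ 2 ∂μ := by
  refine continuous_of_dominated (bound := fun _ => B ^ 2)
    (fun r => ((hw.uncurry_left r).pow 2).measurable.aestronglyMeasurable)
    (fun r => .of_forall fun x => ?_) (integrable_const _)
    (.of_forall fun x => (hw.uncurry_right x).pow 2)
  rw [Real.norm_eq_abs, abs_pow]
  gcongr
  exact hB r x

lemma measurable_of_hasDerivAt {f : ℝ → X → ℝ} {g : X → ℝ} (hf : Continuous (uncurry f))
    (hd : ∀ x, HasDerivAt (fun r => f r x) (g x) t) : Measurable g := by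
  have hderiv : Measurable fun x => deriv (fun r => f r x) t :=
    (measurable_deriv_with_param (f := fun x r => f r x) (hf.comp continuous_swap)).comp
      (measurable_id.prodMk measurable_const)
  simpa only [(hd _).deriv] using hderiv

lemma aestronglyMeasurable_uncurry_of_hasDerivAt [SFinite μ] {f f' : ℝ → X → ℝ}
    (hf : Continuous (uncurry f))
    (hd : ∀ r ∈ Icc s t, ∀ x, HasDerivAt (fun r => f r x) (f' r x) r) :
    AEStronglyMeasurable (uncurry f') ((volume.restrict (Ioc s t)).prod μ) := by
  have hderiv := (measurable_deriv_with_param (f := fun x r => f r x)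
    (hf.comp continuous_swap)).comp measurable_swap
  refine hderiv.aestronglyMeasurable.congr ?_
  filter_upwards [Measure.quasiMeasurePreserving_fst.ae (ae_restrict_mem measurableSet_Ioc)]
    with p hp
  exact (hd p.1 (Ioc_subset_Icc_self hp) p.2).deriv

lemma integral_integral_of_hasDerivAt [SFinite μ] {f f' : ℝ → X → ℝ} {C : ℝ} (hst : s ≤ t)
    (hf : Continuous (uncurry f)) (hs : Integrable (f s) μ) (ht : Integrable (f t) μ)
    (hd : ∀ r ∈ Icc s t, ∀ x, HasDerivAt (fun r => f r x) (f' r x) r)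
    (hf' : ∀ r ∈ Icc s t, Integrable (f' r) μ) (hC : ∀ r ∈ Icc s t, ∫ x, ‖f' r x‖ ∂μ ≤ C) :
    IntervalIntegrable (fun r => ∫ x, f' r x ∂μ) volume s t ∧
      ∫ r in s..t, ∫ x, f' r x ∂μ = ∫ x, f t x ∂μ - ∫ x, f s x ∂μ := by
  have hmeas := aestronglyMeasurable_uncurry_of_hasDerivAt (μ := μ) hf hd
  have hprod : Integrable (uncurry f') ((volume.restrict (Ioc s t)).prod μ) := by
    refine (integrable_prod_iff hmeas).2 ⟨?_, ?_⟩
    · filter_upwards [ae_restrict_mem measurableSet_Ioc] with r hr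
      exact hf' r (Ioc_subset_Icc_self hr)
    · refine (integrable_const C).mono' hmeas.norm.integral_prod_right' ?_
      filter_upwards [ae_restrict_mem measurableSet_Ioc] with r hr
      rw [Real.norm_of_nonneg (integral_nonneg fun _ => norm_nonneg _)]
      exact hC r (Ioc_subset_Icc_self hr)
  refine ⟨(intervalIntegrable_iff_integrableOn_Ioc_of_le hst).2 hprod.integral_prod_left, ?_⟩
  rw [intervalIntegral.integral_of_le hst, integral_integral_swap hprod, ← integral_sub ht hs]
  refine integral_congr_ae ?_
  filter_upwards [hprod.prod_left_ae] with x hx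
  rw [← intervalIntegral.integral_of_le hst]
  exact intervalIntegral.integral_eq_sub_of_hasDerivAt_of_le hst
    (hf.uncurry_right x).continuousOn (fun r hr => hd r (Ioo_subset_Icc_self hr) x)
    ((intervalIntegrable_iff_integrableOn_Ioc_of_le hst).2 hx)

lemma integral_integral_deriv_affine_mul_sq [IsFiniteMeasure μ] {w w' : ℝ → X → ℝ} {q : X → ℝ}
    {B C Q : ℝ} (hst : s ≤ t) (hw : Continuous (uncurry w)) (hB : ∀ r x, |w r x| ≤ B)
    (hd : ∀ r ∈ Icc s t, ∀ x, HasDerivAt (fun r => w r x) (w' r x) r)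
    (hw' : ∀ r ∈ Icc s t, MemLp (w' r) 2 μ) (hC : ∀ r ∈ Icc s t, ∫ x, w' r x ^ 2 ∂μ ≤ C)
    (hq : Continuous q) (hQ : ∀ x, |q x| ≤ Q) (k : ℝ) :
    IntervalIntegrable
        (fun r => ∫ x, (k * w r x ^ 2 + 2 * (q x + k * r) * (w r x * w' r x)) ∂μ) volume s t ∧
      ∫ r in s..t, ∫ x, (k * w r x ^ 2 + 2 * (q x + k * r) * (w r x * w' r x)) ∂μ =
        ∫ x, (q x + k * t) * w t x ^ 2 ∂μ - ∫ x, (q x + k * s) * w s x ^ 2 ∂μ := by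
  obtain ⟨P, hP⟩ := isCompact_Icc.exists_bound_of_continuousOn (s := Icc s t)
    (f := fun r => k * r) (by fun_prop)
  have hweight : ∀ r ∈ Icc s t, ∀ x, |q x + k * r| ≤ |Q| + |P| := fun r hr x =>
    (abs_add_le _ _).trans
      (add_le_add ((hQ x).trans (le_abs_self Q)) ((hP r hr).trans (le_abs_self P)))
  have hf : Continuous (uncurry fun r x => (q x + k * r) * w r x ^ 2) :=
    ((hq.comp continuous_snd).add (continuous_const.mul continuous_fst)).mul (hw.pow 2)
  have hint : ∀ r ∈ Icc s t, Integrable (fun x => (q x + k * r) * w r x ^ 2) μ := fun r hr => by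
    refine .of_bound (hf.uncurry_left r).measurable.aestronglyMeasurable ((|Q| + |P|) * B ^ 2)
      (.of_forall fun x => ?_)
    rw [norm_mul, norm_pow, Real.norm_eq_abs, Real.norm_eq_abs]
    gcongr
    exacts [hweight r hr x, hB r x]
  have hderiv : ∀ r ∈ Icc s t, ∀ x, HasDerivAt (fun r => (q x + k * r) * w r x ^ 2)
      (k * w r x ^ 2 + 2 * (q x + k * r) * (w r x * w' r x)) r := fun r hr x => by
    refine ((((hasDerivAt_id r).const_mul k).const_add (q x)).mul
      ((hd r hr x).fun_pow 2)).congr_deriv ?_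
    simp only [id, Nat.cast_ofNat]
    ring
  have hbound := fun r (hr : r ∈ Icc s t) =>
    integrable_and_integral_norm_mul_sq_add_two_mul_mul_le
      (measurable_of_hasDerivAt hf (hderiv r hr)).aestronglyMeasurable (hB r) (hweight r hr)
      (hw' r hr)
  refine integral_integral_of_hasDerivAt hst hf (hint s (left_mem_Icc.2 hst))
    (hint t (right_mem_Icc.2 hst)) hderiv (fun r hr => (hbound r hr).1)
    (C := μ.real univ * (|k| * B ^ 2) + (|Q| + |P|) * (μ.real univ * B ^ 2 + C)) fun r hr =>
      (hbound r hr).2.trans ?_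
  gcongr
  exact hC r hr

lemma integral_affine_mul_sq_le [IsFiniteMeasure μ] {w w' : ℝ → X → ℝ} {q : X → ℝ}
    {g : ℝ → ℝ} {B C Q k : ℝ} (hst : s ≤ t) (hw : Continuous (uncurry w))
    (hB : ∀ r x, |w r x| ≤ B)
    (hd : ∀ r ∈ Icc s t, ∀ x, HasDerivAt (fun r => w r x) (w' r x) r)
    (hw' : ∀ r ∈ Icc s t, MemLp (w' r) 2 μ) (hC : ∀ r ∈ Icc s t, ∫ x, w' r x ^ 2 ∂μ ≤ C)
    (hq : Continuous q) (hQ : ∀ x, |q x| ≤ Q) (hg : IntervalIntegrable g volume s t)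
    (hle : ∀ r ∈ Icc s t,
      ∫ x, (k * w r x ^ 2 + 2 * (q x + k * r) * (w r x * w' r x)) ∂μ ≤ g r) :
    ∫ x, (q x + k * t) * w t x ^ 2 ∂μ ≤
      ∫ x, (q x + k * s) * w s x ^ 2 ∂μ + ∫ r in s..t, g r := by
  obtain ⟨hint, henergy⟩ :=
    integral_integral_deriv_affine_mul_sq (μ := μ) hst hw hB hd hw' hC hq hQ k
  rw [← sub_le_iff_le_add', ← henergy]
  exact intervalIntegral.integral_mono_on hst hint hg hle

end DerivUnderIntegral

section LocalBoundedness

lemma bddAbove_image_of_isBoundedUnder {X : Type*} [TopologicalSpace X] {K : Set X} {N : X → ℝ}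
    (hK : IsCompact K) (hN : ∀ t ∈ K, (𝓝 t).IsBoundedUnder (· ≤ ·) N) : BddAbove (N '' K) := by
  refine hK.induction_on (by simp) (fun _ _ hst ht => ht.mono (image_mono hst))
    (fun _ _ hs ht => by simpa only [image_union] using hs.union ht) fun t ht => ?_
  obtain ⟨C, hC⟩ := hN t ht
  refine ⟨_, mem_nhdsWithin_of_mem_nhds (eventually_map.1 hC), C, ?_⟩
  rintro _ ⟨s, hs, rfl⟩
  exact hs

lemma exists_eventually_mem_of_subset_iUnion {X ι : Type*} [TopologicalSpace X] [T2Space X]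
    [LocallyCompactSpace X] [Countable ι] {D : Set X} {F : ι → Set X} (hD : IsLocallyClosed D)
    (hne : D.Nonempty) (hF : ∀ n, IsClosed ((↑) ⁻¹' F n : Set D)) (hcover : D ⊆ ⋃ n, F n) :
    ∃ n, ∃ d ∈ D, ∀ᶠ r in 𝓝[D] d, r ∈ F n := by
  have := hne.to_subtype
  have := hD.locallyCompactSpace
  obtain ⟨n, d, hd⟩ := nonempty_interior_of_iUnion_of_closed hF (by
    rw [← preimage_iUnion, preimage_eq_univ_iff, Subtype.range_coe]
    exact hcover)
  refine ⟨n, d, d.2, ?_⟩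
  rw [nhdsWithin_eq_map_subtype_coe d.2]
  exact mem_interior_iff_mem_nhds.1 hd

lemma exists_Ioc_subset_of_isOpen {G : Set ℝ} {s t : ℝ} (hG : IsOpen G) (hst : s < t)
    (ht : t ∈ G) : ∃ c ∈ Ico s t, (c = s ∨ c ∉ G) ∧ Ioc c t ⊆ G := by
  have hcompact : IsCompact (Icc s t ∩ (Gᶜ ∪ {s})) :=
    isCompact_Icc.inter_right (hG.isClosed_compl.union isClosed_singleton)
  obtain ⟨c, ⟨⟨hsc, hct⟩, hc⟩, hmax⟩ :=
    hcompact.exists_isGreatest ⟨s, left_mem_Icc.2 hst.le, .inr rfl⟩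
  have hne : c ≠ t := by
    rintro rfl
    exact hc.elim (· ht) hst.ne'
  refine ⟨c, ⟨hsc, hct.lt_of_ne hne⟩, hc.symm, fun r hr => ?_⟩
  by_contra hrG
  exact hr.1.not_ge (hmax ⟨⟨hsc.trans hr.1.le, hr.2⟩, .inl hrG⟩)

lemma isBoundedUnder_of_forall_le_mul_left {a b K : ℝ} {N : ℝ → ℝ} {F : ℕ → Set ℝ}
    (hF : ∀ n, IsClosed ((↑) ⁻¹' F n : Set (Ioo a b))) (hcover : Ioo a b ⊆ ⋃ n, F n)
    (hN : ∀ n, BddAbove (N '' (Ioo a b ∩ F n))) (hK : 0 ≤ K)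
    (hgap : ∀ c ∈ Ioo a b, ∀ t ∈ Ioo a b, c < t →
      (∀ s ∈ Ioo c t, BddAbove (N '' Icc s t)) → N t ≤ K * N c) :
    ∀ t ∈ Ioo a b, (𝓝 t).IsBoundedUnder (· ≤ ·) N := by
  set G : Set ℝ := {t | (𝓝 t).IsBoundedUnder (· ≤ ·) N}
  change Ioo a b ⊆ G
  have hG : IsOpen G := isOpen_iff_eventually.2 fun t ⟨C, hC⟩ =>
    (eventually_eventually_nhds.2 (eventually_map.1 hC)).mono fun r hr => ⟨C, eventually_map.2 hr⟩
  by_contra hbad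
  obtain ⟨n, d, ⟨hdI, hdG⟩, hd⟩ := exists_eventually_mem_of_subset_iUnion (D := Ioo a b \ G)
    (isOpen_Ioo.isLocallyClosed.inter hG.isClosed_compl.isLocallyClosed)
    (nonempty_of_not_subset hbad)
    (fun n => (hF n).preimage (continuous_inclusion sdiff_subset)) (sdiff_subset.trans hcover)
  obtain ⟨C, hC⟩ := hN n
  obtain ⟨l, u, ⟨hld, hdu⟩, hlu⟩ := mem_nhds_iff_exists_Ioo_subset.1
    (inter_mem (isOpen_Ioo.mem_nhds hdI) (eventually_nhdsWithin_iff.1 hd))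
  have hCbad : ∀ r ∈ Ioo l u, r ∉ G → N r ≤ C := fun r hr hrG =>
    hC (mem_image_of_mem N ⟨(hlu hr).1, (hlu hr).2 ⟨(hlu hr).1, hrG⟩⟩)
  obtain ⟨s, hls, hsd⟩ := exists_between hld
  refine hdG ⟨max C (K * max C (N s)), eventually_map.2 ?_⟩
  filter_upwards [Ioo_mem_nhds hsd hdu] with t ht
  by_cases htG : t ∈ G
  · obtain ⟨c, ⟨hsc, hct⟩, hc, hGc⟩ := exists_Ioc_subset_of_isOpen hG ht.1 htG
    have hcI : c ∈ Ioo l u := ⟨hls.trans_le hsc, hct.trans ht.2⟩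
    have hNc : N c ≤ max C (N s) := by
      rcases hc with rfl | hcG
      · exact le_max_right _ _
      · exact (hCbad c hcI hcG).trans (le_max_left _ _)
    have hNt := hgap c (hlu hcI).1 t (hlu ⟨hls.trans ht.1, ht.2⟩).1 hct fun r hr =>
      bddAbove_image_of_isBoundedUnder isCompact_Icc fun q hq => hGc ⟨hr.1.trans_le hq.1, hq.2⟩
    exact (hNt.trans (mul_le_mul_of_nonneg_left hNc hK)).trans (le_max_right _ _)
  · exact (hCbad t ⟨hls.trans ht.1, ht.2⟩ htG).trans (le_max_left _ _)

end LocalBoundedness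

section DissipativeEvolution

lemma integral_sub_sq_le_two_mul {X : Type*} [MeasurableSpace X] {μ : Measure X} {u v : X → ℝ}
    (hu : MemLp u 2 μ) (hv : MemLp v 2 μ) :
    ∫ x, (u x - v x) ^ 2 ∂μ ≤ 2 * (∫ x, u x ^ 2 ∂μ + ∫ x, v x ^ 2 ∂μ) := by
  rw [← integral_add hu.integrable_sq hv.integrable_sq, ← integral_const_mul]
  refine integral_mono (hu.sub hv).integrable_sq
    ((hu.integrable_sq.add hv.integrable_sq).const_mul 2) fun x => ?_
  simpa only [sq_abs, sub_eq_add_neg, neg_sq] using add_sq_le (a := u x) (b := -v x)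

/-- A bounded trajectory `z` in `L²(μ)` on the time interval `(a, b)`, with pointwise velocity `z'`,
along which distances contract: `⟪z t - z s, z' t - z' s⟫ ≤ 0`. It abstracts a flow generated by a
dissipative operator. The velocity is controlled pointwise in time and space only, with no bound
that is uniform in time, and `z` is extended continuously to all times for convenience. -/
structure IsDissipativeEvolution {X : Type*} [TopologicalSpace X] [MeasurableSpace X]
    (μ : Measure X) (a b : ℝ) (z z' : ℝ → X → ℝ) : Prop where
  continuous : Continuous (uncurry z)
  bounded : ∃ B, ∀ t x, |z t x| ≤ B
  hasDerivAt : ∀ t ∈ Ioo a b, ∀ x, HasDerivAt (fun r => z r x) (z' t x) t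
  continuousOn_deriv : ∀ x, ContinuousOn (fun t => z' t x) (Ioo a b)
  bounded_deriv : ∀ t ∈ Ioo a b, ∃ C, ∀ x, |z' t x| ≤ C
  dissipative : ∀ s ∈ Ioo a b, ∀ t ∈ Ioo a b,
    ∫ x, (z t x - z s x) * (z' t x - z' s x) ∂μ ≤ 0

namespace IsDissipativeEvolution

variable {X : Type*} [TopologicalSpace X] [MeasurableSpace X] {μ : Measure X}
  {a b c s t : ℝ} {z z' : ℝ → X → ℝ}

lemma exists_abs_sub_le (h : IsDissipativeEvolution μ a b z z') :
    ∃ B, ∀ s t x, |z s x - z t x| ≤ B := by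
  obtain ⟨B, hB⟩ := h.bounded
  exact ⟨B + B, fun s t x => (abs_sub _ _).trans (add_le_add (hB s x) (hB t x))⟩

lemma continuous_sub_comp (h : IsDissipativeEvolution μ a b z z') {f g : ℝ → ℝ}
    (hf : Continuous f) (hg : Continuous g) :
    Continuous (uncurry fun r x => z (f r) x - z (g r) x) :=
  (h.continuous.comp (hf.prodMap continuous_id)).sub (h.continuous.comp (hg.prodMap continuous_id))

lemma isClosed_deriv_le (h : IsDissipativeEvolution μ a b z z') (C : ℝ) :
    IsClosed ((↑) ⁻¹' {t | ∀ x, |z' t x| ≤ C} : Set (Ioo a b)) := by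
  have hinter : (Subtype.val ⁻¹' {t | ∀ x, |z' t x| ≤ C} : Set (Ioo a b)) =
      ⋂ x, {t : Ioo a b | |z' t x| ≤ C} := by
    ext t
    simp only [mem_preimage, mem_ofPred_eq, mem_iInter]
  rw [hinter]
  exact isClosed_iInter fun x =>
    isClosed_le (h.continuousOn_deriv x).domRestrict.abs continuous_const

variable [OpensMeasurableSpace X] [IsFiniteMeasure μ]

lemma memLp (h : IsDissipativeEvolution μ a b z z') (t : ℝ) : MemLp (z t) 2 μ := by
  obtain ⟨B, hB⟩ := h.bounded
  exact .of_bound (h.continuous.uncurry_left t).measurable.aestronglyMeasurable B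
    (.of_forall (hB t))

lemma memLp_deriv (h : IsDissipativeEvolution μ a b z z') (ht : t ∈ Ioo a b) :
    MemLp (z' t) 2 μ := by
  obtain ⟨C, hC⟩ := h.bounded_deriv t ht
  exact .of_bound (measurable_of_hasDerivAt h.continuous (h.hasDerivAt t ht)).aestronglyMeasurable C
    (.of_forall hC)

lemma continuous_integral_sub_sq (h : IsDissipativeEvolution μ a b z z') {f g : ℝ → ℝ}
    (hf : Continuous f) (hg : Continuous g) :
    Continuous fun r => ∫ x, (z (f r) x - z (g r) x) ^ 2 ∂μ :=
  have ⟨_, hB⟩ := h.exists_abs_sub_le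
  continuous_integral_sq (h.continuous_sub_comp hf hg) fun _ => hB _ _

lemma integral_weighted_sub_le (h : IsDissipativeEvolution μ a b z z') (hc : c ∈ Ioo a b)
    (ht : t ∈ Ioo a b) {ρ : ℝ} (hρ : 0 ≤ ρ) :
    ∫ x, (-1 * (z t x - z c x) ^ 2 + 2 * ρ * ((z t x - z c x) * z' t x)) ∂μ ≤
      ρ ^ 2 * ∫ x, z' c x ^ 2 ∂μ := by
  have hw := (h.memLp t).sub (h.memLp c)
  have hv := h.memLp_deriv hc
  have hdiss : Integrable (fun x => (z t x - z c x) * (z' t x - z' c x)) μ :=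
    hw.integrable_mul ((h.memLp_deriv ht).sub hv)
  calc ∫ x, (-1 * (z t x - z c x) ^ 2 + 2 * ρ * ((z t x - z c x) * z' t x)) ∂μ
      ≤ ∫ x, (2 * ρ * ((z t x - z c x) * (z' t x - z' c x)) + ρ ^ 2 * z' c x ^ 2) ∂μ := by
        refine integral_mono ((hw.integrable_sq.const_mul _).add
          ((hw.integrable_mul (h.memLp_deriv ht)).const_mul _))
          ((hdiss.const_mul _).add (hv.integrable_sq.const_mul _)) fun x => ?_
        simp only
        nlinarith [sq_nonneg (z t x - z c x - ρ * z' c x)]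
    _ = 2 * ρ * ∫ x, (z t x - z c x) * (z' t x - z' c x) ∂μ + ρ ^ 2 * ∫ x, z' c x ^ 2 ∂μ := by
        rw [integral_add (hdiss.const_mul _) (hv.integrable_sq.const_mul _), integral_const_mul,
          integral_const_mul]
    _ ≤ ρ ^ 2 * ∫ x, z' c x ^ 2 ∂μ :=
        add_le_of_nonpos_left (mul_nonpos_of_nonneg_of_nonpos (by positivity)
          (h.dissipative c hc t ht))

-- The weight `2t - c - r` has slope `-1`, which produces the term absorbing the square, and at
-- `r = t` it is `t - c`. As `s → c` the first term on the right drops out and leaves the bound on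
-- the speed at `c`.
lemma mul_integral_sub_sq_le (h : IsDissipativeEvolution μ a b z z') {C : ℝ} (hc : c ∈ Ioo a b)
    (hcs : c ≤ s) (hst : s ≤ t) (htb : t < b)
    (hC : ∀ r ∈ Icc s t, ∫ x, z' r x ^ 2 ∂μ ≤ C) :
    (t - c) * ∫ x, (z t x - z c x) ^ 2 ∂μ ≤
      (2 * t - c - s) * ∫ x, (z s x - z c x) ^ 2 ∂μ +
        (t - s) * ((2 * (t - c)) ^ 2 * ∫ x, z' c x ^ 2 ∂μ) := by
  obtain ⟨B, hB⟩ := h.exists_abs_sub_le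
  have hI : ∀ r ∈ Icc s t, r ∈ Ioo a b := fun r hr =>
    ⟨hc.1.trans_le (hcs.trans hr.1), hr.2.trans_lt htb⟩
  have hle := integral_affine_mul_sq_le (μ := μ) (w := fun r x => z r x - z c x)
    (q := fun _ => 2 * t - c) (k := -1) (g := fun _ => (2 * (t - c)) ^ 2 * ∫ x, z' c x ^ 2 ∂μ) hst
    (h.continuous_sub_comp continuous_id continuous_const) (fun r => hB r c)
    (fun r hr x => (h.hasDerivAt r (hI r hr) x).sub_const _)
    (fun r hr => h.memLp_deriv (hI r hr)) hC continuous_const (fun _ => le_rfl)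
    intervalIntegrable_const fun r hr => by
      refine (h.integral_weighted_sub_le hc (hI r hr) (by linarith [hr.2])).trans ?_
      gcongr
      · linarith [hr.2]
      · linarith [hr.1]
  rw [intervalIntegral.integral_const, smul_eq_mul] at hle
  simp only [integral_const_mul] at hle
  linarith

lemma integral_sub_sq_le (h : IsDissipativeEvolution μ a b z z') (hc : c ∈ Ioo a b)
    (hct : c < t) (htb : t < b)
    (hbdd : ∀ s ∈ Ioo c t, BddAbove ((fun r => ∫ x, z' r x ^ 2 ∂μ) '' Icc s t)) :
    ∫ x, (z t x - z c x) ^ 2 ∂μ ≤ (2 * (t - c)) ^ 2 * ∫ x, z' c x ^ 2 ∂μ := by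
  have hle : ∀ᶠ s in 𝓝[>] c, (t - c) * ∫ x, (z t x - z c x) ^ 2 ∂μ ≤
      (2 * t - c - s) * ∫ x, (z s x - z c x) ^ 2 ∂μ +
        (t - s) * ((2 * (t - c)) ^ 2 * ∫ x, z' c x ^ 2 ∂μ) := by
    filter_upwards [Ioo_mem_nhdsGT hct] with s hs
    obtain ⟨C, hC⟩ := hbdd s hs
    exact h.mul_integral_sub_sq_le hc hs.1.le hs.2.le htb fun r hr => hC (mem_image_of_mem _ hr)
  have hcont : Continuous fun s => (2 * t - c - s) * ∫ x, (z s x - z c x) ^ 2 ∂μ +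
      (t - s) * ((2 * (t - c)) ^ 2 * ∫ x, z' c x ^ 2 ∂μ) :=
    ((by fun_prop : Continuous fun s => 2 * t - c - s).mul
      (h.continuous_integral_sub_sq continuous_id continuous_const)).add (by fun_prop)
  have hlim := ge_of_tendsto (hcont.continuousWithinAt (x := c)).tendsto hle
  simp only [sub_self, ne_eq, OfNat.ofNat_ne_zero, not_false_eq_true, zero_pow, integral_zero,
    mul_zero, zero_add] at hlim
  exact le_of_mul_le_mul_left hlim (sub_pos.2 hct)

lemma integral_shift_sub_sq_le (h : IsDissipativeEvolution μ a b z z') {d : ℝ} (hd : 0 ≤ d)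
    (has : a < s) (hst : s ≤ t) (htb : t + d < b)
    (hbdd : BddAbove ((fun r => ∫ x, z' r x ^ 2 ∂μ) '' Icc s (t + d))) :
    ∫ x, (z (t + d) x - z t x) ^ 2 ∂μ ≤ ∫ x, (z (s + d) x - z s x) ^ 2 ∂μ := by
  obtain ⟨B, hB⟩ := h.exists_abs_sub_le
  obtain ⟨C, hC⟩ := hbdd
  have hI : ∀ r ∈ Icc s (t + d), r ∈ Ioo a b := fun r hr => ⟨has.trans_le hr.1, hr.2.trans_lt htb⟩
  have hleft : ∀ r ∈ Icc s t, r ∈ Icc s (t + d) := fun r hr => ⟨hr.1, by linarith [hr.2]⟩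
  have hright : ∀ r ∈ Icc s t, r + d ∈ Icc s (t + d) := fun r hr =>
    ⟨by linarith [hr.1], by linarith [hr.2]⟩
  have hmem : ∀ r ∈ Icc s (t + d), MemLp (z' r) 2 μ := fun r hr => h.memLp_deriv (hI r hr)
  have hC' : ∀ r ∈ Icc s t, ∫ x, (z' (r + d) x - z' r x) ^ 2 ∂μ ≤ 2 * (C + C) := fun r hr =>
    (integral_sub_sq_le_two_mul (hmem _ (hright r hr)) (hmem r (hleft r hr))).trans <|
      mul_le_mul_of_nonneg_left (add_le_add (hC (mem_image_of_mem _ (hright r hr)))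
        (hC (mem_image_of_mem _ (hleft r hr)))) zero_le_two
  have hle := integral_affine_mul_sq_le (μ := μ) (w := fun r x => z (r + d) x - z r x)
    (q := fun _ => 1) (k := 0) (g := fun _ => 0) hst
    (h.continuous_sub_comp (continuous_add_const d) continuous_id) (fun r => hB _ _)
    (fun r hr x => ((h.hasDerivAt _ (hI _ (hright r hr)) x).comp_add_const r d).sub
      (h.hasDerivAt r (hI r (hleft r hr)) x))
    (fun r hr => (hmem _ (hright r hr)).sub (hmem r (hleft r hr))) hC' continuous_const
    (fun _ => le_rfl) intervalIntegrable_const fun r hr => by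
      simpa only [zero_mul, zero_add, add_zero, mul_one, integral_const_mul] using
        mul_nonpos_of_nonneg_of_nonpos zero_le_two
          (h.dissipative r (hI r (hleft r hr)) (r + d) (hI _ (hright r hr)))
  simpa only [zero_mul, add_zero, one_mul, intervalIntegral.integral_const, smul_zero] using hle

lemma integral_deriv_sq_le (h : IsDissipativeEvolution μ a b z z') (hc : c ∈ Ioo a b)
    (ht : t ∈ Ioo a b) (hct : c < t)
    (hbdd : ∀ s ∈ Ioo c t, BddAbove ((fun r => ∫ x, z' r x ^ 2 ∂μ) '' Icc s t)) :
    ∫ x, z' t x ^ 2 ∂μ ≤ 4 * ∫ x, z' c x ^ 2 ∂μ := by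
  refine integral_sq_le_of_hasDerivAt_of_eventually_le
    (fun r => (h.continuous.uncurry_left r).measurable) (h.hasDerivAt t ht) (h.memLp_deriv ht)
    h.memLp (mul_nonneg zero_le_four (integral_nonneg fun x => sq_nonneg _)) ?_
  filter_upwards [Ioo_mem_nhdsLT hct] with r hr
  have hshift : ∀ᶠ s in 𝓝[>] c, ∫ x, (z t x - z r x) ^ 2 ∂μ ≤
      ∫ x, (z (s + (t - r)) x - z s x) ^ 2 ∂μ := by
    filter_upwards [Ioo_mem_nhdsGT hr.1] with s hs
    simpa only [add_sub_cancel] using h.integral_shift_sub_sq_le (d := t - r)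
      (sub_nonneg.2 hr.2.le) (hc.1.trans hs.1) hs.2.le (by linarith [ht.2])
      (by simpa only [add_sub_cancel] using hbdd s ⟨hs.1, hs.2.trans hr.2⟩)
  calc ∫ x, (z r x - z t x) ^ 2 ∂μ
      = ∫ x, (z t x - z r x) ^ 2 ∂μ := by simp only [sub_sq_comm]
    _ ≤ ∫ x, (z (c + (t - r)) x - z c x) ^ 2 ∂μ :=
        ge_of_tendsto (h.continuous_integral_sub_sq (continuous_add_const _)
          continuous_id).continuousWithinAt.tendsto hshift
    _ ≤ (2 * (c + (t - r) - c)) ^ 2 * ∫ x, z' c x ^ 2 ∂μ :=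
        h.integral_sub_sq_le hc (by linarith [hr.2]) (by linarith [hr.1, ht.2]) fun s hs =>
          (hbdd s ⟨hs.1, by linarith [hs.2, hr.1]⟩).mono <| image_mono <|
            Icc_subset_Icc_right (by linarith [hr.1])
    _ = 4 * (∫ x, z' c x ^ 2 ∂μ) * (r - t) ^ 2 := by ring

theorem bddAbove_integral_deriv_sq (h : IsDissipativeEvolution μ a b z z')
    (hst : Icc s t ⊆ Ioo a b) : BddAbove ((fun r => ∫ x, z' r x ^ 2 ∂μ) '' Icc s t) := by
  refine bddAbove_image_of_isBoundedUnder isCompact_Icc fun r hr =>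
    isBoundedUnder_of_forall_le_mul_left (F := fun n : ℕ => {t | ∀ x, |z' t x| ≤ n})
      (fun n => h.isClosed_deriv_le n) (fun r hr => ?_) (fun n => ?_) zero_le_four
      (fun c hc t ht => h.integral_deriv_sq_le hc ht) r (hst hr)
  · obtain ⟨C, hC⟩ := h.bounded_deriv r hr
    obtain ⟨n, hn⟩ := exists_nat_ge C
    exact mem_iUnion.2 ⟨n, fun x => (hC x).trans hn⟩
  · refine ⟨μ.real univ * (n : ℝ) ^ 2, ?_⟩
    rintro _ ⟨r, ⟨hrI, hrn⟩, rfl⟩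
    refine (integral_mono (h.memLp_deriv hrI).integrable_sq (integrable_const _) fun x =>
      sq_le_sq' (abs_le.1 (hrn x)).1 (abs_le.1 (hrn x)).2).trans_eq ?_
    rw [integral_const, smul_eq_mul]

lemma continuous_integral_sq (h : IsDissipativeEvolution μ a b z z') :
    Continuous fun r => ∫ x, z r x ^ 2 ∂μ :=
  have ⟨_, hB⟩ := h.bounded
  _root_.continuous_integral_sq h.continuous hB

lemma intervalIntegrable_deriv_affine_mul_sq (h : IsDissipativeEvolution μ a b z z')
    {q : X → ℝ} {Q : ℝ} (hst : s ≤ t) (hI : Icc s t ⊆ Ioo a b) (hq : Continuous q)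
    (hQ : ∀ x, |q x| ≤ Q) (k : ℝ) :
    IntervalIntegrable
      (fun r => ∫ x, (k * z r x ^ 2 + 2 * (q x + k * r) * (z r x * z' r x)) ∂μ) volume s t :=
  have ⟨_, hB⟩ := h.bounded
  have ⟨_, hC⟩ := h.bddAbove_integral_deriv_sq hI
  (integral_integral_deriv_affine_mul_sq hst h.continuous hB (fun r hr => h.hasDerivAt r (hI hr))
    (fun _ hr => h.memLp_deriv (hI hr)) (fun _ hr => hC (mem_image_of_mem _ hr)) hq hQ k).1

lemma integral_affine_mul_sq_le (h : IsDissipativeEvolution μ a b z z')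
    {q : X → ℝ} {g : ℝ → ℝ} {Q k : ℝ} (hst : s ≤ t) (hI : Icc s t ⊆ Ioo a b) (hq : Continuous q)
    (hQ : ∀ x, |q x| ≤ Q) (hg : IntervalIntegrable g volume s t)
    (hle : ∀ r ∈ Icc s t,
      ∫ x, (k * z r x ^ 2 + 2 * (q x + k * r) * (z r x * z' r x)) ∂μ ≤ g r) :
    ∫ x, (q x + k * t) * z t x ^ 2 ∂μ ≤
      ∫ x, (q x + k * s) * z s x ^ 2 ∂μ + ∫ r in s..t, g r :=
  have ⟨_, hB⟩ := h.bounded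
  have ⟨_, hC⟩ := h.bddAbove_integral_deriv_sq hI
  _root_.integral_affine_mul_sq_le hst h.continuous hB (fun r hr => h.hasDerivAt r (hI hr))
    (fun _ hr => h.memLp_deriv (hI hr)) (fun _ hr => hC (mem_image_of_mem _ hr)) hq hQ hg hle

end IsDissipativeEvolution

end DissipativeEvolution

section KdVOperator

/-- Lebesgue measure on an open interval, as a measure on the subtype, where the PDE holds
everywhere. -/
noncomputable def volumeIoo (a b : ℝ) : Measure (Ioo a b) :=
  volume.comap Subtype.val

instance (a b : ℝ) : IsFiniteMeasure (volumeIoo a b) where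
  measure_univ_lt_top := by
    rw [volumeIoo, (MeasurableEmbedding.subtype_coe measurableSet_Ioo).comap_apply, image_univ,
      Subtype.range_coe]
    exact measure_Ioo_lt_top

lemma integral_volumeIoo {a b : ℝ} (hab : a ≤ b) (f : ℝ → ℝ) :
    ∫ x, f x ∂volumeIoo a b = ∫ x in a..b, f x := by
  rw [volumeIoo, integral_subtype_comap measurableSet_Ioo, intervalIntegral.integral_of_le hab,
    integral_Ioc_eq_integral_Ioo]

/-- The spatial operator `v ↦ v_x + v_xxx` of the linearized KdV equation on `[0, L]`, with
one-sided derivatives at the endpoints. -/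
noncomputable def kdvOp (L : ℝ) (v : ℝ → ℝ) (x : ℝ) : ℝ :=
  derivWithin v (Icc 0 L) x + iteratedDerivWithin 3 v (Icc 0 L) x

/-- The classical domain of `kdvOp L`: `C³` functions on `[0, L]` satisfying the boundary
conditions `v(0) = v(L) = v_x(L) = 0`. -/
structure KdVDomain (L : ℝ) (v : ℝ → ℝ) : Prop where
  contDiffOn : ContDiffOn ℝ 3 v (Icc 0 L)
  apply_left : v 0 = 0
  apply_right : v L = 0
  derivWithin_right : derivWithin v (Icc 0 L) L = 0

/-- The squared `H¹(0, L)` norm, with one-sided derivatives at the endpoints. -/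
noncomputable def h1NormSq (L : ℝ) (v : ℝ → ℝ) : ℝ :=
  ∫ x in (0 : ℝ)..L, (v x ^ 2 + derivWithin v (Icc 0 L) x ^ 2)

lemma h1NormSq_nonneg {L : ℝ} (hL : 0 ≤ L) (v : ℝ → ℝ) : 0 ≤ h1NormSq L v :=
  intervalIntegral.integral_nonneg hL fun _ _ => by positivity

lemma hasDerivAt_iteratedDerivWithin_Icc {a b x : ℝ} {f : ℝ → ℝ} {n : WithTop ℕ∞} {m : ℕ}
    (hf : ContDiffOn ℝ n f (Icc a b)) (hmn : m < n) (hx : x ∈ Ioo a b) :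
    HasDerivAt (iteratedDerivWithin m f (Icc a b)) (iteratedDerivWithin (m + 1) f (Icc a b) x)
      x := by
  have hab : a < b := hx.1.trans hx.2
  rw [iteratedDerivWithin_succ]
  exact (hf.differentiableOn_iteratedDerivWithin hmn (uniqueDiffOn_Icc hab) x
    (Ioo_subset_Icc_self hx)).hasDerivWithinAt.hasDerivAt (Icc_mem_nhds hx.1 hx.2)

section ContDiffOn

variable {L : ℝ} {u v : ℝ → ℝ}

lemma kdvOp_sub (hL : 0 < L) (hu : ContDiffOn ℝ 3 u (Icc 0 L)) (hv : ContDiffOn ℝ 3 v (Icc 0 L))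
    {x : ℝ} (hx : x ∈ Icc 0 L) : kdvOp L (u - v) x = kdvOp L u x - kdvOp L v x := by
  rw [kdvOp, derivWithin_sub (hu.differentiableOn three_ne_zero x hx)
    (hv.differentiableOn three_ne_zero x hx),
    iteratedDerivWithin_sub hx (uniqueDiffOn_Icc hL) (hu x hx) (hv x hx), kdvOp, kdvOp]
  ring

lemma continuousOn_kdvOp (hL : 0 < L) (hv : ContDiffOn ℝ 3 v (Icc 0 L)) :
    ContinuousOn (kdvOp L v) (Icc 0 L) :=
  (hv.continuousOn_derivWithin (uniqueDiffOn_Icc hL) (by norm_num)).add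
    (hv.continuousOn_iteratedDerivWithin le_rfl (uniqueDiffOn_Icc hL))

lemma hasDerivAt_affine_multiplier (hv : ContDiffOn ℝ 3 v (Icc 0 L)) (α β : ℝ) {x : ℝ}
    (hx : x ∈ Ioo 0 L) :
    HasDerivAt
      (fun x => (α * x + β) * (v x ^ 2 + 2 * (v x * iteratedDerivWithin 2 v (Icc 0 L) x) -
        derivWithin v (Icc 0 L) x ^ 2) - 2 * α * (v x * derivWithin v (Icc 0 L) x))
      (2 * (α * x + β) * (v x * kdvOp L v x) + α * v x ^ 2 -
        3 * α * derivWithin v (Icc 0 L) x ^ 2) x := by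
  have h0 := hasDerivAt_iteratedDerivWithin_Icc (m := 0) hv (by norm_num) hx
  have h1 := hasDerivAt_iteratedDerivWithin_Icc (m := 1) hv (by norm_num) hx
  have h2 := hasDerivAt_iteratedDerivWithin_Icc (m := 2) hv (by norm_num) hx
  simp only [iteratedDerivWithin_zero, zero_add, iteratedDerivWithin_one, Nat.reduceAdd]
    at h0 h1 h2
  refine (((((hasDerivAt_id x).const_mul α).add_const β).mul
    (((h0.fun_pow 2).add ((h0.mul h2).const_mul 2)).sub (h1.fun_pow 2))).sub
      ((h0.mul h1).const_mul (2 * α))).congr_deriv ?_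
  simp only [kdvOp, id, Nat.cast_ofNat, Pi.add_apply, Pi.sub_apply, Pi.mul_apply]
  ring

lemma h1NormSq_eq (hL : 0 < L) (hv : ContDiffOn ℝ 1 v (Icc 0 L)) :
    h1NormSq L v = (∫ x in (0 : ℝ)..L, v x ^ 2) +
      ∫ x in (0 : ℝ)..L, derivWithin v (Icc 0 L) x ^ 2 :=
  intervalIntegral.integral_add ((hv.continuousOn.pow 2).intervalIntegrable_of_Icc hL.le)
    (((hv.continuousOn_derivWithin (uniqueDiffOn_Icc hL) le_rfl).pow 2).intervalIntegrable_of_Icc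
      hL.le)

end ContDiffOn

namespace KdVDomain

variable {L : ℝ} {u v : ℝ → ℝ}

lemma sub (hL : 0 < L) (hu : KdVDomain L u) (hv : KdVDomain L v) : KdVDomain L (u - v) where
  contDiffOn := hu.contDiffOn.sub hv.contDiffOn
  apply_left := by rw [Pi.sub_apply, hu.apply_left, hv.apply_left, sub_zero]
  apply_right := by rw [Pi.sub_apply, hu.apply_right, hv.apply_right, sub_zero]
  derivWithin_right := by
    have hmem : L ∈ Icc 0 L := right_mem_Icc.2 hL.le
    rw [derivWithin_sub (hu.contDiffOn.differentiableOn three_ne_zero L hmem)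
      (hv.contDiffOn.differentiableOn three_ne_zero L hmem), hu.derivWithin_right,
      hv.derivWithin_right, sub_zero]

lemma integral_affine_mul_mul_kdvOp (hL : 0 < L) (hv : KdVDomain L v) (α β : ℝ) :
    ∫ x in (0 : ℝ)..L, 2 * (α * x + β) * (v x * kdvOp L v x) =
      3 * α * (∫ x in (0 : ℝ)..L, derivWithin v (Icc 0 L) x ^ 2) -
        α * (∫ x in (0 : ℝ)..L, v x ^ 2) + β * derivWithin v (Icc 0 L) 0 ^ 2 := by
  have hv0 : ContinuousOn v (Icc 0 L) := hv.contDiffOn.continuousOn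
  have hv1 := hv.contDiffOn.continuousOn_derivWithin (uniqueDiffOn_Icc hL) (by norm_num)
  have hv2 := hv.contDiffOn.continuousOn_iteratedDerivWithin (m := 2) (by norm_num)
    (uniqueDiffOn_Icc hL)
  have hA := continuousOn_kdvOp hL hv.contDiffOn
  have hintegrable : ∀ {f : ℝ → ℝ}, ContinuousOn f (Icc 0 L) → IntervalIntegrable f volume 0 L :=
    fun hf => hf.intervalIntegrable_of_Icc hL.le
  have hftc := intervalIntegral.integral_eq_sub_of_hasDerivAt_of_le hL.le (by fun_prop)
    (fun x hx => hasDerivAt_affine_multiplier hv.contDiffOn α β hx) (hintegrable (by fun_prop))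
  rw [intervalIntegral.integral_sub (hintegrable (by fun_prop)) (hintegrable (by fun_prop)),
    intervalIntegral.integral_add (hintegrable (by fun_prop)) (hintegrable (by fun_prop)),
    intervalIntegral.integral_const_mul, intervalIntegral.integral_const_mul, hv.apply_left,
    hv.apply_right, hv.derivWithin_right] at hftc
  linear_combination hftc

lemma integral_energy_eq (hL : 0 < L) (hv : KdVDomain L v) (α β k t : ℝ) :
    ∫ x, (k * v x ^ 2 + 2 * (α * x + β + k * t) * (v x * -kdvOp L v x)) ∂volumeIoo 0 L =
      (k + 4 * α) * (∫ x in (0 : ℝ)..L, v x ^ 2) - 3 * α * h1NormSq L v -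
        (β + k * t) * derivWithin v (Icc 0 L) 0 ^ 2 := by
  have hv0 : ContinuousOn v (Icc 0 L) := hv.contDiffOn.continuousOn
  have hA := continuousOn_kdvOp hL hv.contDiffOn
  rw [h1NormSq_eq hL (hv.contDiffOn.of_le (by norm_num)), integral_volumeIoo hL.le fun x =>
    k * v x ^ 2 + 2 * (α * x + β + k * t) * (v x * -kdvOp L v x)]
  simp only [mul_neg, ← sub_eq_add_neg, add_assoc]
  rw [intervalIntegral.integral_sub
      (ContinuousOn.intervalIntegrable_of_Icc hL.le (by fun_prop))
      (ContinuousOn.intervalIntegrable_of_Icc hL.le (by fun_prop)),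
    intervalIntegral.integral_const_mul, hv.integral_affine_mul_mul_kdvOp hL]
  ring

-- The slopes `1/3` in `x` and `-4/3` in `t` cancel the coefficient `k + 4α` and normalize `3α = 1`.
lemma integral_katoMultiplier_le (hL : 0 < L) (hv : KdVDomain L v) {t T : ℝ} (ht : t ≤ T) :
    ∫ x, (-(4 / 3) * v x ^ 2 + 2 * (1 / 3 * x + 4 / 3 * T + -(4 / 3) * t) *
      (v x * -kdvOp L v x)) ∂volumeIoo 0 L ≤ -h1NormSq L v := by
  rw [hv.integral_energy_eq hL]
  nlinarith [mul_nonneg (sub_nonneg.2 ht) (sq_nonneg (derivWithin v (Icc 0 L) 0))]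

lemma integral_sub_mul_kdvOp_sub_nonpos (hL : 0 < L) (hu : KdVDomain L u)
    (hv : KdVDomain L v) :
    ∫ x, (u x - v x) * (-kdvOp L u x - -kdvOp L v x) ∂volumeIoo 0 L ≤ 0 := by
  have henergy := (hu.sub hL hv).integral_affine_mul_mul_kdvOp hL 0 1
  have hle : ∫ x in (0 : ℝ)..L, (u x - v x) * (-kdvOp L u x - -kdvOp L v x) =
    -(1 / 2) * ∫ x in (0 : ℝ)..L, 2 * (0 * x + 1) * ((u - v) x * kdvOp L (u - v) x) := by
    rw [← intervalIntegral.integral_const_mul]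
    refine intervalIntegral.integral_congr fun x hx => ?_
    rw [uIcc_of_le hL.le] at hx
    simp only [kdvOp_sub hL hu.contDiffOn hv.contDiffOn hx, Pi.sub_apply]
    ring
  rw [integral_volumeIoo hL.le fun x => (u x - v x) * (-kdvOp L u x - -kdvOp L v x), hle, henergy]
  nlinarith [sq_nonneg (derivWithin (u - v) (Icc 0 L) 0)]

end KdVDomain

end KdVOperator

section Evolution

lemma integral_le_of_forall_integral_le {f g : ℝ → ℝ} {a b c : ℝ} (hab : a < b)
    (hf : ∀ r ∈ Ioo a b, 0 ≤ f r)
    (hint : ∀ s ∈ Ioo a b, ∀ t ∈ Ioo a b, s ≤ t → IntervalIntegrable f volume s t)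
    (hle : ∀ s ∈ Ioo a b, ∀ t ∈ Ioo a b, s ≤ t → ∫ r in s..t, f r ≤ g s)
    (hg : Tendsto g (𝓝[>] a) (𝓝 c)) : ∫ r in a..b, f r ≤ c := by
  obtain ⟨m, ham, hmb⟩ := exists_between hab
  obtain ⟨u, -, hu, hua⟩ := exists_seq_strictAnti_tendsto' ham
  obtain ⟨v, -, hv, hvb⟩ := exists_seq_strictMono_tendsto' hmb
  have huI : ∀ n, u n ∈ Ioo a b := fun n => ⟨(hu n).1, (hu n).2.trans hmb⟩
  have hvI : ∀ n, v n ∈ Ioo a b := fun n => ⟨ham.trans (hv n).1, (hv n).2⟩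
  have huv : ∀ n, u n ≤ v n := fun n => ((hu n).2.trans (hv n).1).le
  have hIoc : ∀ n, Ioc (u n) (v n) ⊆ Ioo a b := fun n r hr =>
    ⟨(huI n).1.trans hr.1, hr.2.trans_lt (hvI n).2⟩
  have hcover : AECover (volume.restrict (Ioo a b)) atTop fun n => Ioc (u n) (v n) :=
    aecover_Ioo_of_Ioc hua hvb
  have hrestrict : ∀ n, ∫ r in Ioc (u n) (v n), f r ∂volume.restrict (Ioo a b) =
      ∫ r in u n..v n, f r := fun n => by
    rw [Measure.restrict_restrict_of_subset (hIoc n), intervalIntegral.integral_of_le (huv n)]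
  have hgu : Tendsto (g ∘ u) atTop (𝓝 c) :=
    hg.comp (tendsto_nhdsWithin_iff.2 ⟨hua, .of_forall fun n => (hu n).1⟩)
  have hle' : ∀ n, ∫ r in Ioc (u n) (v n), f r ∂volume.restrict (Ioo a b) ≤ g (u n) := fun n =>
    (hrestrict n).trans_le (hle _ (huI n) _ (hvI n) (huv n))
  obtain ⟨M, hM⟩ := hgu.bddAbove_range
  have hfi : Integrable f (volume.restrict (Ioo a b)) :=
    hcover.integrable_of_integral_bounded_of_nonneg_ae M
      (fun n => ((intervalIntegrable_iff_integrableOn_Ioc_of_le (huv n)).1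
        (hint _ (huI n) _ (hvI n) (huv n))).mono_measure Measure.restrict_le_self)
      ((ae_restrict_mem measurableSet_Ioo).mono hf)
      (.of_forall fun n => (hle' n).trans (hM (mem_range_self n)))
  rw [intervalIntegral.integral_of_le hab.le, integral_Ioc_eq_integral_Ioo]
  exact le_of_tendsto_of_tendsto' (hcover.integral_tendsto_of_countably_generated hfi) hgu hle'

lemma integral_sq_projIcc {L T t : ℝ} (z : ℝ → ℝ → ℝ) (hL : 0 ≤ L) (hT : 0 ≤ T)
    (ht : t ∈ Icc 0 T) :
    ∫ x : Ioo 0 L, z (projIcc 0 T hT t) x ^ 2 ∂volumeIoo 0 L = ∫ x in (0 : ℝ)..L, z t x ^ 2 := by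
  rw [projIcc_of_mem hT ht, integral_volumeIoo hL fun x => z t x ^ 2]

namespace IsLinearKdVSol

variable {L T s t x : ℝ} {z : ℝ → ℝ → ℝ}

lemma kdvDomain (hz : IsLinearKdVSol L T z) (ht : t ∈ Icc 0 T) : KdVDomain L (z t) where
  contDiffOn := hz.1 t ht
  apply_left := (hz.2.2.2.2 t ht).1
  apply_right := (hz.2.2.2.2 t ht).2.1
  derivWithin_right := (hz.2.2.2.2 t ht).2.2

lemma derivWithin_eq_neg_kdvOp (hz : IsLinearKdVSol L T z) (ht : t ∈ Ioo 0 T) (hx : x ∈ Ioo 0 L) :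
    derivWithin (fun r => z r x) (Icc 0 T) t = -kdvOp L (z t) x := by
  rw [kdvOp]
  linarith [hz.2.2.2.1 t ht x hx]

lemma hasDerivAt (hz : IsLinearKdVSol L T z) (ht : t ∈ Ioo 0 T) (hx : x ∈ Ioo 0 L) :
    HasDerivAt (fun r => z r x) (-kdvOp L (z t) x) t := by
  rw [← hz.derivWithin_eq_neg_kdvOp ht hx]
  exact ((hz.2.1 x (Ioo_subset_Icc_self hx)).differentiableOn one_ne_zero t
    (Ioo_subset_Icc_self ht)).hasDerivWithinAt.hasDerivAt (Icc_mem_nhds ht.1 ht.2)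

lemma continuousOn_neg_kdvOp_apply (hz : IsLinearKdVSol L T z) (hx : x ∈ Ioo 0 L) :
    ContinuousOn (fun t => -kdvOp L (z t) x) (Ioo 0 T) := fun t ht =>
  (((hz.2.1 x (Ioo_subset_Icc_self hx)).continuousOn_derivWithin
    (uniqueDiffOn_Icc (ht.1.trans ht.2)) le_rfl).mono Ioo_subset_Icc_self).congr
      (fun _ hr => (hz.derivWithin_eq_neg_kdvOp hr hx).symm) t ht

lemma isDissipativeEvolution (hz : IsLinearKdVSol L T z) (hL : 0 < L) (hT : 0 ≤ T) :
    IsDissipativeEvolution (volumeIoo 0 L) 0 T (fun t x => z (projIcc 0 T hT t) x)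
      fun t x => -kdvOp L (z t) x where
  continuous := hz.2.2.1.comp_continuous
    (f := fun p : ℝ × Ioo 0 L => ((projIcc 0 T hT p.1 : ℝ), (p.2 : ℝ))) (by fun_prop)
    fun p => ⟨(projIcc 0 T hT p.1).2, Ioo_subset_Icc_self p.2.2⟩
  bounded := by
    obtain ⟨B, hB⟩ := (isCompact_Icc.prod isCompact_Icc).exists_bound_of_continuousOn hz.2.2.1
    exact ⟨B, fun t x => hB (_, _) ⟨(projIcc 0 T hT t).2, Ioo_subset_Icc_self x.2⟩⟩
  hasDerivAt t ht x := (hz.hasDerivAt ht x.2).congr_of_eventuallyEq <| by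
    filter_upwards [Icc_mem_nhds ht.1 ht.2] with r hr
    rw [projIcc_of_mem hT hr]
  continuousOn_deriv x := hz.continuousOn_neg_kdvOp_apply x.2
  bounded_deriv t ht := by
    obtain ⟨C, hC⟩ := isCompact_Icc.exists_bound_of_continuousOn
      (continuousOn_kdvOp hL (hz.kdvDomain (Ioo_subset_Icc_self ht)).contDiffOn)
    exact ⟨C, fun x => (abs_neg _).trans_le (hC x (Ioo_subset_Icc_self x.2))⟩
  dissipative s hs t ht := by
    simpa only [projIcc_of_mem hT (Ioo_subset_Icc_self hs),
      projIcc_of_mem hT (Ioo_subset_Icc_self ht)] using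
        KdVDomain.integral_sub_mul_kdvOp_sub_nonpos hL (hz.kdvDomain (Ioo_subset_Icc_self ht))
          (hz.kdvDomain (Ioo_subset_Icc_self hs))

lemma intervalIntegrable_h1NormSq (hz : IsLinearKdVSol L T z) (hL : 0 < L) (hst : s ≤ t)
    (hI : Icc s t ⊆ Ioo 0 T) : IntervalIntegrable (fun r => h1NormSq L (z r)) volume s t := by
  have hT : 0 ≤ T := (nonempty_Ioo.1 ⟨s, hI (left_mem_Icc.2 hst)⟩).le
  have h := hz.isDissipativeEvolution hL hT
  have hsq := (h.continuous_integral_sq.const_mul (4 / 3)).intervalIntegrable (μ := volume) s t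
  have henergy := h.intervalIntegrable_deriv_affine_mul_sq (q := fun x => 1 / 3 * x + 0)
    (Q := L / 3) hst hI (by fun_prop)
    (fun x => abs_le.2 ⟨by linarith [x.2.1], by linarith [x.2.2]⟩) 0
  refine (hsq.sub henergy).congr fun r hr => ?_
  rw [uIoc_of_le hst] at hr
  have hr' : r ∈ Icc 0 T := Ioo_subset_Icc_self (hI (Ioc_subset_Icc_self hr))
  simp only [projIcc_of_mem hT hr']
  rw [integral_volumeIoo hL.le fun x => z r x ^ 2, (hz.kdvDomain hr').integral_energy_eq hL]
  ring

lemma integral_h1NormSq_le (hz : IsLinearKdVSol L T z) (hL : 0 < L) (hst : s ≤ t)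
    (hI : Icc s t ⊆ Ioo 0 T) :
    ∫ r in s..t, h1NormSq L (z r) ≤ (4 * T + L) / 3 * ∫ x in (0 : ℝ)..L, z s x ^ 2 := by
  have hs := hI (left_mem_Icc.2 hst)
  have ht := hI (right_mem_Icc.2 hst)
  have hT : 0 ≤ T := (hs.1.trans hs.2).le
  have h := hz.isDissipativeEvolution hL hT
  have hle := h.integral_affine_mul_sq_le (q := fun x => 1 / 3 * x + 4 / 3 * T) (k := -(4 / 3))
    (g := fun r => -h1NormSq L (z r)) (Q := (4 * T + L) / 3) hst hI (by fun_prop)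
    (fun x => abs_le.2 ⟨by linarith [x.2.1], by linarith [x.2.2]⟩)
    (hz.intervalIntegrable_h1NormSq hL hst hI).neg fun r hr => by
      have hr' := hI hr
      simpa only [projIcc_of_mem hT (Ioo_subset_Icc_self hr')] using
        (hz.kdvDomain (Ioo_subset_Icc_self hr')).integral_katoMultiplier_le hL hr'.2.le
  have hterminal : 0 ≤ ∫ x : Ioo 0 L, (1 / 3 * x + 4 / 3 * T + -(4 / 3) * t) *
      z (projIcc 0 T hT t) x ^ 2 ∂volumeIoo 0 L :=
    integral_nonneg fun x => mul_nonneg (by linarith [x.2.1, ht.2]) (sq_nonneg _)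
  have hinitial : ∫ x : Ioo 0 L, (1 / 3 * x + 4 / 3 * T + -(4 / 3) * s) *
      z (projIcc 0 T hT s) x ^ 2 ∂volumeIoo 0 L ≤
        (4 * T + L) / 3 * ∫ x in (0 : ℝ)..L, z s x ^ 2 := by
    rw [← integral_sq_projIcc z hL.le hT (Ioo_subset_Icc_self hs), ← integral_const_mul]
    refine integral_mono_of_nonneg (.of_forall fun x => ?_)
      ((h.memLp s).integrable_sq.const_mul _) (.of_forall fun x => ?_)
    · exact mul_nonneg (by linarith [x.2.1, hs.2]) (sq_nonneg _)
    · exact mul_le_mul_of_nonneg_right (by linarith [x.2.2, hs.1]) (sq_nonneg _)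
  rw [intervalIntegral.integral_neg] at hle
  linarith

lemma tendsto_integral_sq (hz : IsLinearKdVSol L T z) (hL : 0 < L) (hT : 0 < T) :
    Tendsto (fun r => ∫ x in (0 : ℝ)..L, z r x ^ 2) (𝓝[>] 0)
      (𝓝 (∫ x in (0 : ℝ)..L, z 0 x ^ 2)) := by
  have hcont := (hz.isDissipativeEvolution hL hT.le).continuous_integral_sq.tendsto 0
  rw [integral_sq_projIcc z hL.le hT.le (left_mem_Icc.2 hT.le)] at hcont
  refine (hcont.mono_left nhdsWithin_le_nhds).congr' ?_
  filter_upwards [Ioo_mem_nhdsGT hT] with r hr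
    using integral_sq_projIcc z hL.le hT.le (Ioo_subset_Icc_self hr)

end IsLinearKdVSol

end Evolution

/-- Kato smoothing effect: a classical solution of the linearized KdV
system with initial datum `z₀` satisfies
`‖z‖_{L²(0,T;H¹(0,L))} ≤ ((4T + L)/3)^{1/2} ‖z₀‖_{L²(0,L)}`, where
`‖z‖²_{L²(0,T;H¹(0,L))} = ∫₀ᵀ ∫₀ᴸ (z(t,x)² + z_x(t,x)²) dx dt`. -/
theorem linearKdV_kato_smoothing (L T : ℝ) (hL : 0 < L) (hT : 0 < T)
    (z : ℝ → ℝ → ℝ) (hz : IsLinearKdVSol L T z)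
    (z₀ : ℝ → ℝ) (hinit : ∀ x ∈ Icc (0:ℝ) L, z 0 x = z₀ x) :
    Real.sqrt (∫ t in (0:ℝ)..T, ∫ x in (0:ℝ)..L,
        ((z t x) ^ 2 + (derivWithin (z t) (Icc (0:ℝ) L) x) ^ 2))
      ≤ Real.sqrt ((4 * T + L) / 3) * L2norm L z₀ := by
  have hinitial : ∫ x in (0 : ℝ)..L, z 0 x ^ 2 = ∫ x in (0 : ℝ)..L, z₀ x ^ 2 :=
    intervalIntegral.integral_congr fun x hx => by
      simp only [hinit x (by rwa [uIcc_of_le hL.le] at hx)]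
  have hsub : ∀ s ∈ Ioo 0 T, ∀ t ∈ Ioo 0 T, Icc s t ⊆ Ioo 0 T := fun s hs t ht =>
    Icc_subset_Ioo hs.1 ht.2
  have hkato : ∫ t in (0 : ℝ)..T, h1NormSq L (z t) ≤
      (4 * T + L) / 3 * ∫ x in (0 : ℝ)..L, z 0 x ^ 2 :=
    integral_le_of_forall_integral_le hT (fun r _ => h1NormSq_nonneg hL.le (z r))
      (fun s hs t ht hst => hz.intervalIntegrable_h1NormSq hL hst (hsub s hs t ht))
      (fun s hs t ht hst => hz.integral_h1NormSq_le hL hst (hsub s hs t ht))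
      ((hz.tendsto_integral_sq hL hT).const_mul _)
  rw [L2norm, ← Real.sqrt_mul (by positivity), ← hinitial]
  exact Real.sqrt_le_sqrt hkato
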